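/- arXiv:2108.05314 — 2 statements merged into one kernel-verified Lean document; each statement's English description precedes it below -/
import Mathlib

section
/- Let μ be a regular uncountable cardinal, B a Boolean algebra satisfying the μ-chain condition, and ⟨a_n : n < ω⟩ a maximal antichain of B. Then there is no family ⟨b_α : α < μ⟩ of elements of B such that: (i) for every finite u ⊆ μ, the meet ⨅_{α ∈ u} b_α is ≠ ⊥; and (ii) for every nonempty finite u ⊆ μ and every natural number n ≤ |u|, (⨅_{α ∈ u} b_α) ⊓ a_n = ⊥. -/
/-!
Fix `c`, and call a set of indices centered below `c` if each of its finite subsets `u` satisfies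
`u.inf b ⊓ c ≠ ⊥`. By the Teichmüller–Tukey lemma every index `i` with `b i ⊓ c ≠ ⊥` lies in a
maximal centered set. If all centered sets are finite, the meets over distinct maximal ones are
disjoint below `c`, so the chain condition and regularity leave fewer than `μ` such indices `i`.
Hence, when `μ` indices are distributed over fewer than `μ` elements `c`, some `c` carries an
infinite centered set. For `c = a n` this is incompatible with meets of more than `n` members
vanishing on `a n`.
-/

section ChainCondition

open Cardinal Order

universe u

/-- The `μ`-chain condition: every antichain, in the sense of a set of pairwise disjoint nonzero
elements, has fewer than `μ` members. It bounds the number of maximal centered sets. -/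
def ChainCondition (B : Type u) [PartialOrder B] [OrderBot B] (μ : Cardinal.{u}) : Prop :=
  ∀ A : Set B, (∀ a ∈ A, a ≠ ⊥) → A.Pairwise Disjoint → #A < μ

theorem ChainCondition.mk_lt_of_pairwise_disjoint {B β : Type u} [PartialOrder B] [OrderBot B]
    {μ : Cardinal.{u}} (hcc : ChainCondition B μ) {f : β → B} (hf : ∀ x, f x ≠ ⊥)
    (hdisj : Pairwise fun x y => Disjoint (f x) (f y)) : #β < μ := by
  have hinj : Function.Injective f := fun x y hxy => by
    by_contra hne
    exact (hdisj hne).ne (hf x) hxy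
  rw [← mk_range_eq f hinj]
  exact hcc (Set.range f) (Set.forall_mem_range.2 hf) hdisj.range_pairwise

/-- A set `s` of indices is centered below `c` if the finite meets of `b` over `s` are all
compatible with `c`. Taking the empty meet `⊤` into account, this includes `c ≠ ⊥`. -/
def CenteredBelow {B ι : Type*} [SemilatticeInf B] [BoundedOrder B] (b : ι → B) (c : B)
    (s : Set ι) : Prop :=
  ∀ u : Finset ι, ↑u ⊆ s → u.inf b ⊓ c ≠ ⊥

namespace CenteredBelow

section Maximal

variable {B ι : Type*} [SemilatticeInf B] [BoundedOrder B] {b : ι → B} {c : B}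

theorem mono {s t : Set ι} (ht : CenteredBelow b c t) (hst : s ⊆ t) : CenteredBelow b c s :=
  fun u hus => ht u (hus.trans hst)

theorem coe_finset_iff {u : Finset ι} : CenteredBelow b c u ↔ u.inf b ⊓ c ≠ ⊥ := by
  refine ⟨fun h => h u subset_rfl, fun h v hvu => ne_bot_of_le_ne_bot h ?_⟩
  exact inf_le_inf_right c (Finset.inf_mono (Finset.coe_subset.1 hvu))

theorem isOfFiniteCharacter (b : ι → B) (c : B) : IsOfFiniteCharacter {s | CenteredBelow b c s} :=
  fun _ => ⟨fun hs _ hts _ => mono hs hts,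
    fun h u hus => h u hus u.finite_toSet u subset_rfl⟩

theorem exists_maximal_mem {i : ι} (hi : b i ⊓ c ≠ ⊥) :
    ∃ s, i ∈ s ∧ Maximal (CenteredBelow b c) s := by
  have hsingle : CenteredBelow b c ({i} : Finset ι) :=
    coe_finset_iff.2 (by rwa [Finset.inf_singleton])
  obtain ⟨s, his, hs⟩ := (isOfFiniteCharacter b c).exists_maximal hsingle
  exact ⟨s, his (Finset.mem_coe.2 (Finset.mem_singleton_self i)), hs⟩

theorem disjoint_of_maximal {u v : Finset ι} (hu : Maximal (CenteredBelow b c) ↑u)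
    (hv : Maximal (CenteredBelow b c) ↑v) (huv : u ≠ v) :
    Disjoint (u.inf b ⊓ c) (v.inf b ⊓ c) := by
  classical
  by_contra hmeet
  have hunion : CenteredBelow b c ↑(u ∪ v) :=
    coe_finset_iff.2 (by rwa [Finset.inf_union, inf_inf_distrib_right, ne_eq, ← disjoint_iff])
  have hu_eq := hu.eq_of_subset hunion (Finset.coe_subset.2 Finset.subset_union_left)
  have hv_eq := hv.eq_of_subset hunion (Finset.coe_subset.2 Finset.subset_union_right)
  exact huv (Finset.coe_injective (hu_eq.trans hv_eq.symm))

end Maximal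

variable {B ι : Type u} [SemilatticeInf B] [BoundedOrder B] {μ : Cardinal.{u}}
  {b : ι → B} {c : B}

theorem mk_setOf_inf_ne_bot_lt (hreg : μ.IsRegular) (hcc : ChainCondition B μ)
    (hfin : ∀ s, CenteredBelow b c s → s.Finite) : #{i | b i ⊓ c ≠ ⊥} < μ := by
  let M := {u : Finset ι // Maximal (CenteredBelow b c) ↑u}
  have hM : #M < μ := hcc.mk_lt_of_pairwise_disjoint
    (f := fun u : M => u.1.inf b ⊓ c) (fun u => coe_finset_iff.1 u.2.prop)
    (fun u v huv => disjoint_of_maximal u.2 v.2 (Subtype.coe_ne_coe.2 huv))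
  have hcover : {i | b i ⊓ c ≠ ⊥} ⊆ ⋃ u : M, (u.1 : Set ι) := fun i hi => by
    obtain ⟨s, his, hs⟩ := exists_maximal_mem hi
    lift s to Finset ι using hfin s hs.prop
    exact Set.mem_iUnion.2 ⟨⟨s, hs⟩, his⟩
  refine (mk_le_mk_of_subset hcover).trans_lt ?_
  exact (card_iUnion_lt_iff_forall_of_isRegular hreg hM).2
    fun u => (lt_aleph0_of_finite _).trans_le hreg.aleph0_le

end CenteredBelow

theorem stmt4_general {B ι : Type u} [SemilatticeInf B] [BoundedOrder B] {μ : Cardinal.{u}}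
    (hreg : μ.IsRegular) (hcc : ChainCondition B μ) (hι : μ ≤ #ι) {D : Set B} (hD : #D < μ)
    (b : ι → B) (hb : ∀ i, ∃ c ∈ D, b i ⊓ c ≠ ⊥) :
    ∃ c ∈ D, ∃ s : Set ι, s.Infinite ∧ CenteredBelow b c s := by
  by_contra! hfin
  have hlt : #(⋃ c ∈ D, {i | b i ⊓ c ≠ ⊥}) < μ :=
    (card_biUnion_lt_iff_forall_of_isRegular hreg hD).2 fun c hc =>
      CenteredBelow.mk_setOf_inf_ne_bot_lt hreg hcc fun s hs =>
        by_contra fun hinf => hfin c hc s hinf hs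
  have huniv : (⋃ c ∈ D, {i | b i ⊓ c ≠ ⊥}) = Set.univ :=
    Set.eq_univ_of_forall fun i => Set.mem_iUnion₂.2 <| by simpa using hb i
  rw [huniv, mk_univ] at hlt
  exact hι.not_gt hlt

end ChainCondition

/-- **Boolean-algebraic core of Theorem 7.2.** Let `μ` be regular uncountable, `B` a Boolean
algebra with the `μ`-c.c., and `⟨a n : n < ω⟩` a maximal antichain of `B`. Then there is no
`μ`-indexed family `⟨b α⟩` all of whose finite meets are nonzero yet, for every nonempty
finite `u` and every `n ≤ |u|`, the meet over `u` is disjoint from `a n`. -/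
theorem stmt4 {B : Type u} [BooleanAlgebra B] (μ : Cardinal.{u})
    (hreg : μ.IsRegular) (hunc : Cardinal.aleph0 < μ)
    (hcc : ∀ A : Set B, (∀ a ∈ A, a ≠ ⊥) → A.Pairwise (fun x y => x ⊓ y = ⊥) →
      Cardinal.mk A < μ)
    (a : ℕ → B) (ha0 : ∀ n, a n ≠ ⊥) (hdisj : ∀ m n : ℕ, m ≠ n → a m ⊓ a n = ⊥)
    (hmax : ∀ x : B, x ≠ ⊥ → ∃ n, x ⊓ a n ≠ ⊥)
    {ι : Type u} (hι : Cardinal.mk ι = μ) :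
    ¬ ∃ b : ι → B,
      (∀ u : Finset ι, u.inf b ≠ ⊥) ∧
      (∀ u : Finset ι, u.Nonempty → ∀ n : ℕ, n ≤ u.card → u.inf b ⊓ a n = ⊥) := by
  rintro ⟨b, hb, hba⟩
  obtain ⟨_, ⟨n, rfl⟩, s, hinf, hs⟩ := stmt4_general hreg
    (fun A hA hd => hcc A hA (hd.imp fun _ _ => Disjoint.eq_bot)) hι.ge
    ((Set.countable_range a).le_aleph0.trans_lt hunc) b
    fun i => Set.exists_range_iff.2 (hmax (b i) (by simpa using hb {i}))
  obtain ⟨u, hus, hu⟩ := hinf.exists_subset_card_eq (n + 1)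
  exact hs u hus (hba u (Finset.card_pos.1 (by lia)) n (by lia))
end

section
/- Let k and n be integers with 2 ≤ k ≤ n, let v be an index set, and let ⟨C_α : α ∈ v⟩ be a Δ-system of sets with heart C* (i.e., C_α ∩ C_β = C* for all distinct α, β ∈ v). For each α ∈ v let g_α : [C_α]^k → {0,1} be such that g_α and g_β agree on [C*]^k for all α, β ∈ v. Assume that for each α ∈ v there is no n-element set A ⊆ C_α with g_α(B) = 1 for every B ∈ [A]^k. Then there is no n-element set A ⊆ ⋃_{α ∈ v} C_α such that for every B ∈ [A]^k there exists α ∈ v with B ⊆ C_α and g_α(B) = 1. -/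
/-!
Two members of a Δ-system meet only in the heart, so a point outside the heart determines the
member containing it. Since `2 ≤ k`, every two points of `A` lie together in some `k`-element
subset of `A`, hence in a common member; if some point of `A` is outside the heart, the member
it determines contains all of `A`, and otherwise every member does. A set `B` assigned the value
`1` by some `g b` also gets it from the member containing `A`: either this member is `b`, or `B`
lies in the heart, where the assignments agree.
-/

theorem exists_subset_card_eq_of_mem_of_mem {α : Type*} {A : Finset α} {k : ℕ}
    (hk : 2 ≤ k) (hkA : k ≤ A.card) {x y : α} (hx : x ∈ A) (hy : y ∈ A) :
    ∃ B ⊆ A, B.card = k ∧ x ∈ B ∧ y ∈ B := by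
  classical
  have hxy : {x, y} ⊆ A := Finset.insert_subset hx (Finset.singleton_subset_iff.2 hy)
  obtain ⟨B, hxyB, hBA, hBk⟩ :=
    Finset.exists_subsuperset_card_eq hxy (Finset.card_le_two.trans hk) hkA
  obtain ⟨hxB, hyB⟩ := Finset.insert_subset_iff.1 hxyB
  exact ⟨B, hBA, hBk, hxB, Finset.singleton_subset_iff.1 hyB⟩

/-- A Δ-system (sunflower) with heart `R`: any two members with distinct indices meet exactly
in `R`. With at most one index, `R` is arbitrary and need not be contained in a member. -/
def IsDeltaSystem {α ι : Type*} (C : ι → Set α) (R : Set α) : Prop :=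
  Pairwise fun a b => C a ∩ C b = R

namespace IsDeltaSystem

variable {α ι : Type*} {C : ι → Set α} {R : Set α} {a b : ι}

theorem eq_of_mem_of_mem_of_notMem_heart (hC : IsDeltaSystem C R) {x : α}
    (ha : x ∈ C a) (hb : x ∈ C b) (hx : x ∉ R) : a = b :=
  of_not_not fun hab => hx ((hC hab).subset ⟨ha, hb⟩)

theorem eq_or_subset_heart (hC : IsDeltaSystem C R) {B : Set α}
    (ha : B ⊆ C a) (hb : B ⊆ C b) : a = b ∨ B ⊆ R :=
  or_iff_not_imp_left.2 fun hab => (Set.subset_inter ha hb).trans (hC hab).subset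

theorem heart_inter_iUnion_subset (hC : IsDeltaSystem C R) (a : ι) : R ∩ ⋃ b, C b ⊆ C a := by
  rintro x ⟨hxR, hx⟩
  obtain ⟨b, hb⟩ := Set.mem_iUnion.1 hx
  obtain rfl | hab := eq_or_ne a b
  · exact hb
  · exact ((hC hab).superset hxR).1

theorem exists_subset_of_forall_pair (hC : IsDeltaSystem C R) {S : Set α} (hS : S.Nonempty)
    (hpair : ∀ x ∈ S, ∀ y ∈ S, ∃ a, x ∈ C a ∧ y ∈ C a) : ∃ a, S ⊆ C a := by
  by_cases hSR : S ⊆ R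
  · obtain ⟨x, hx⟩ := hS
    obtain ⟨a, -, -⟩ := hpair x hx x hx
    have hSU : S ⊆ ⋃ b, C b := fun y hy =>
      let ⟨b, hyb, _⟩ := hpair y hy y hy
      Set.mem_iUnion_of_mem b hyb
    exact ⟨a, (Set.subset_inter hSR hSU).trans (hC.heart_inter_iUnion_subset a)⟩
  · obtain ⟨x, hx, hxR⟩ := Set.not_subset.1 hSR
    obtain ⟨a, hxa, -⟩ := hpair x hx x hx
    refine ⟨a, fun y hy => ?_⟩
    obtain ⟨b, hxb, hyb⟩ := hpair x hx y hy
    obtain rfl : a = b := hC.eq_of_mem_of_mem_of_notMem_heart hxa hxb hxR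
    exact hyb

theorem exists_subset_of_forall_card_eq (hC : IsDeltaSystem C R) {A : Finset α} {k : ℕ}
    (hk : 2 ≤ k) (hkA : k ≤ A.card)
    (hA : ∀ B ⊆ A, B.card = k → ∃ a, (B : Set α) ⊆ C a) : ∃ a, (A : Set α) ⊆ C a := by
  have hne : A.Nonempty := Finset.card_pos.1 (by lia)
  refine hC.exists_subset_of_forall_pair hne fun x hx y hy => ?_
  obtain ⟨B, hBA, hBk, hxB, hyB⟩ := exists_subset_card_eq_of_mem_of_mem hk hkA hx hy
  obtain ⟨a, ha⟩ := hA B hBA hBk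
  exact ⟨a, ha hxB, ha hyB⟩

end IsDeltaSystem

/-- **Combinatorial core of equation (32) in Lemma 6.5.** Let `2 ≤ k ≤ n`, let
`⟨C a : a ∈ v⟩` be a Δ-system with heart `C*`, and let `g a : [C a]^k → {0,1}` agree on
`[C*]^k`. If no `C a` contains an `n`-element set all of whose `k`-element subsets get value
`1` under `g a`, then neither does the union: there is no `n`-element `A ⊆ ⋃ C a` such that
every `k`-element `B ⊆ A` satisfies `B ⊆ C a` and `g a B = 1` for some `a`. -/
theorem stmt10 {α : Type u} (k n : ℕ) (hk : 2 ≤ k) (hkn : k ≤ n)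
    {v : Type u} (C : v → Set α) (Cstar : Set α)
    (hΔ : ∀ a b : v, a ≠ b → C a ∩ C b = Cstar)
    (g : v → Finset α → Bool)
    (hagree : ∀ a b : v, ∀ B : Finset α, ↑B ⊆ Cstar → B.card = k → g a B = g b B)
    (hloc : ∀ a : v, ¬ ∃ A : Finset α, ↑A ⊆ C a ∧ A.card = n ∧
      ∀ B ⊆ A, B.card = k → g a B = true) :
    ¬ ∃ A : Finset α, (↑A ⊆ ⋃ a : v, C a) ∧ A.card = n ∧
      ∀ B ⊆ A, B.card = k → ∃ a : v, ↑B ⊆ C a ∧ g a B = true := by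
  rintro ⟨A, -, rfl, hA⟩
  have hC : IsDeltaSystem C Cstar := fun a b hab => hΔ a b hab
  obtain ⟨a, ha⟩ : ∃ a, (A : Set α) ⊆ C a :=
    hC.exists_subset_of_forall_card_eq hk hkn fun B hBA hBk =>
      (hA B hBA hBk).imp fun _ hb => hb.1
  refine hloc a ⟨A, ha, rfl, fun B hBA hBk => ?_⟩
  obtain ⟨b, hBb, hgb⟩ := hA B hBA hBk
  have hBa : (B : Set α) ⊆ C a := (Finset.coe_subset.2 hBA).trans ha
  obtain rfl | hBR := hC.eq_or_subset_heart hBa hBb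
  · exact hgb
  · exact (hagree a b B hBR hBk).trans hgb
end
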